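/- arXiv:math/9505202 — 2 statements merged into one kernel-verified Lean document; each statement's English description precedes it below -/
import Mathlib

section
/- Let f be a holomorphic function defined on a connected open set Ω in ℂ^p with values in ℂ^N. If the collection of all partial derivatives ∂^α f(χ), over all multi-indices α ∈ ℤ_+^p, spans ℂ^N for all χ in a dense open subset of Ω, then already the derivatives ∂^α f(χ) with |α| ≤ N−1 span ℂ^N for all χ in a dense open subset of Ω. -/
/-- Iterated complex partial derivative along a list of coordinate directions;
a multi-index `α` corresponds to such a list of length `|α|`. -/
noncomputable def multiDeriv {p N : ℕ} :
    List (Fin p) → ((Fin p → ℂ) → (Fin N → ℂ)) → ((Fin p → ℂ) → (Fin N → ℂ))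
  | [], f => f
  | j :: L, f => fun x => fderiv ℂ (multiDeriv L f) x (Pi.single j 1)

open Set Filter Topology MeasureTheory Metric in
/-- Directional derivatives of holomorphic maps are holomorphic. -/
lemma differentiableOn_fderiv_apply {p N : ℕ} {Ω : Set (Fin p → ℂ)} (hΩ : IsOpen Ω)
    {f : (Fin p → ℂ) → (Fin N → ℂ)} (hf : DifferentiableOn ℂ f Ω) (v : Fin p → ℂ) (hv : ‖v‖ ≤ 1) :
    DifferentiableOn ℂ (fun x => fderiv ℂ f x v) Ω := by
  intro x₀ hx₀
  have hd : ∀ x ∈ Ω, DifferentiableAt ℂ f x := fun x hx => hf.differentiableAt (hΩ.mem_nhds hx)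
  obtain ⟨R, hR, hball⟩ : ∃ R > 0, ∀ y ∈ ball x₀ R, y ∈ Ω ∧ dist (f y) (f x₀) < 1 := by
    have h1 : ∀ᶠ y in 𝓝 x₀, y ∈ Ω ∧ dist (f y) (f x₀) < 1 :=
      (hΩ.eventually_mem hx₀).and ((hd x₀ hx₀).continuousAt.eventually (ball_mem_nhds _ one_pos))
    exact Metric.eventually_nhds_iff_ball.1 h1
  obtain ⟨r, hr, hrR⟩ : ∃ r : ℝ, 0 < r ∧ 4 * r = R := ⟨R / 4, by positivity, by ring⟩
  have hz : ∀ x ∈ ball x₀ r, ∀ z : ℂ, ‖z‖ < 2 * r → x + z • v ∈ ball x₀ (3 * r) := by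
    intro x hx z hz
    rw [mem_ball, dist_eq_norm] at hx ⊢
    have : ‖z • v‖ ≤ ‖z‖ := by
      rw [norm_smul]; exact mul_le_of_le_one_right (norm_nonneg _) hv
    calc ‖x + z • v - x₀‖ = ‖(x - x₀) + z • v‖ := by congr 1; abel
      _ ≤ ‖x - x₀‖ + ‖z • v‖ := norm_add_le _ _
      _ < 3 * r := by linarith
  have h3 : ball x₀ (3 * r) ⊆ ball x₀ R := ball_subset_ball (by linarith)
  have hbd : ∀ x ∈ ball x₀ (3 * r), ‖fderiv ℂ f x‖ ≤ 2 / r := by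
    intro x hx
    have hsub : ball x r ⊆ ball x₀ R := by
      apply ball_subset_ball'
      have := mem_ball.1 hx
      linarith
    refine Complex.norm_fderiv_le_div_of_mapsTo_ball
      (fun y hy => (hd y (hball y (hsub hy)).1).differentiableWithinAt) ?_ hr
    intro y hy
    rw [mem_closedBall]
    have h1 := (hball y (hsub hy)).2
    have h2 := (hball x (h3 hx)).2
    have := dist_triangle_right (f y) (f x) (f x₀)
    linarith
  let κ : ℝ → ℂ := fun θ => deriv (circleMap 0 r) θ * ((circleMap 0 r θ - 0) ^ 2)⁻¹
  have hκ : Continuous κ := by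
    simp only [κ, deriv_circleMap, sub_zero]
    refine ((continuous_circleMap 0 r).mul continuous_const).mul
      (((continuous_circleMap 0 r).pow 2).inv₀ fun θ => ?_)
    exact pow_ne_zero _ (circleMap_ne_center hr.ne')
  have hnc : ∀ θ, ‖circleMap 0 r θ‖ < 2 * r := fun θ => by
    rw [norm_circleMap_zero, abs_of_pos hr]; linarith
  have key : ∀ x ∈ ball x₀ r, fderiv ℂ f x v =
      (2 * Real.pi * Complex.I : ℂ)⁻¹ • ∫ θ in Ioc 0 (2 * Real.pi),
        κ θ • f (x + circleMap 0 r θ • v) := by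
    intro x hx
    have hxd := hd x (hball x (h3 (by simpa using hz x hx 0 (by simpa using hr)))).1
    have hg : DifferentiableOn ℂ (fun z : ℂ => f (x + z • v)) (ball 0 (2 * r)) := by
      intro z hzz
      have := hd _ (hball _ (h3 (hz x hx z (by simpa using hzz)))).1
      have h2 : DifferentiableAt ℂ (fun z : ℂ => x + z • v) z := by fun_prop
      exact (DifferentiableAt.comp z this h2).differentiableWithinAt
    have := Complex.two_pi_I_inv_smul_circleIntegral_sub_sq_inv_smul_of_differentiable
      isOpen_ball (c := 0) (R := r) (closedBall_subset_ball (by linarith)) hg (mem_ball_self hr)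
    have h5 : deriv (fun z : ℂ => f (x + z • v)) 0 = fderiv ℂ f x v := by
      have h6 : HasFDerivAt f (fderiv ℂ f x) (x + (0:ℂ) • v) := by simpa using hxd.hasFDerivAt
      have h7 : HasDerivAt (fun z : ℂ => x + z • v) v 0 := by
        simpa using ((hasDerivAt_id (0:ℂ)).smul_const v).const_add x
      exact (h6.comp_hasDerivAt 0 h7).deriv
    rw [← h5, ← this, circleIntegral, intervalIntegral.integral_of_le (by positivity)]
    simp only [κ, smul_smul]
  have hloc : (fun x => fderiv ℂ f x v) =ᶠ[𝓝 x₀] fun x => 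
      (2 * Real.pi * Complex.I : ℂ)⁻¹ • ∫ θ in Ioc 0 (2 * Real.pi),
        κ θ • f (x + circleMap 0 r θ • v) := by
    filter_upwards [ball_mem_nhds x₀ hr] with x hx using key x hx
  refine (DifferentiableAt.congr_of_eventuallyEq ?_ hloc).differentiableWithinAt
  refine DifferentiableAt.fun_const_smul ?_ _
  have hcont : ∀ x ∈ ball x₀ r, Continuous fun θ => κ θ • f (x + circleMap 0 r θ • v) := by
    intro x hx
    refine hκ.smul (continuous_iff_continuousAt.2 fun θ => ?_)
    have h1 := (hd _ (hball _ (h3 (hz x hx _ (hnc θ)))).1).continuousAt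
    have h2 : ContinuousAt (fun θ => x + circleMap 0 r θ • v) θ :=
      (continuous_const.add ((continuous_circleMap 0 r).smul continuous_const)).continuousAt
    exact ContinuousAt.comp (f := fun θ => x + circleMap 0 r θ • v) h1 h2
  refine (hasFDerivAt_integral_of_dominated_of_fderiv_le (𝕜 := ℂ)
    (F' := fun x θ => κ θ • fderiv ℂ f (x + circleMap 0 r θ • v))
    (bound := fun θ => ‖κ θ‖ * (2 / r)) (ball_mem_nhds x₀ hr) ?_ ?_ ?_ ?_ ?_ ?_).differentiableAt
  · filter_upwards [ball_mem_nhds x₀ hr] with x hx using (hcont x hx).aestronglyMeasurable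
  · exact ((hcont x₀ (mem_ball_self hr)).integrableOn_Icc).mono_set Ioc_subset_Icc_self
  · refine hκ.aestronglyMeasurable.smul ?_
    refine Measurable.aestronglyMeasurable ?_
    exact (measurable_fderiv ℂ f).comp
      (continuous_const.add ((continuous_circleMap 0 r).smul continuous_const)).measurable
  · refine Eventually.of_forall fun θ x hx => ?_
    rw [norm_smul]
    exact mul_le_mul_of_nonneg_left (hbd _ (hz x hx _ (hnc θ))) (norm_nonneg _)
  · exact ((hκ.norm.mul continuous_const).integrableOn_Icc).mono_set Ioc_subset_Icc_self
  · refine Eventually.of_forall fun θ x hx => ?_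
    have h1 := (hd _ (hball _ (h3 (hz x hx _ (hnc θ)))).1).hasFDerivAt
    have h2 : HasFDerivAt (fun x => x + circleMap 0 r θ • v) (ContinuousLinearMap.id ℂ _) x :=
      (hasFDerivAt_id x).add_const _
    simpa using (h1.comp x h2).const_smul (κ θ)

open Filter Topology in
/-- If `h` lies in the span of `g i` near `x₀`, where the `g i x₀` are independent, then a
derivative of `h` lies in the span of the `g i` and of their derivatives. -/
lemma fderiv_mem_of_eventually_mem {p N d : ℕ} {x₀ : Fin p → ℂ}
    {g : Fin d → (Fin p → ℂ) → (Fin N → ℂ)} {h : (Fin p → ℂ) → (Fin N → ℂ)}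
    (hg : ∀ i, DifferentiableAt ℂ (g i) x₀) (hh : DifferentiableAt ℂ h x₀)
    (hli : LinearIndependent ℂ fun i => g i x₀)
    (hmem : ∀ᶠ x in 𝓝 x₀, h x ∈ Submodule.span ℂ (Set.range fun i => g i x))
    (v : Fin p → ℂ) (P : Submodule ℂ (Fin N → ℂ))
    (hP : ∀ i, g i x₀ ∈ P) (hP' : ∀ i, fderiv ℂ (g i) x₀ v ∈ P) :
    fderiv ℂ h x₀ v ∈ P := by
  let T : (Fin p → ℂ) → ((Fin d → ℂ) →L[ℂ] (Fin N → ℂ)) := fun x =>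
    ∑ i, (ContinuousLinearMap.proj (R := ℂ) (φ := fun _ : Fin d => ℂ) i).smulRight (g i x)
  have hTa : ∀ x c, T x c = ∑ i, c i • g i x := by
    intro x c
    simp [T]
  have hTd : DifferentiableAt ℂ T x₀ := by
    refine DifferentiableAt.fun_sum fun i _ => ?_
    exact ((ContinuousLinearMap.smulRightL ℂ (Fin d → ℂ) (Fin N → ℂ)
      (ContinuousLinearMap.proj i)).differentiableAt).comp x₀ (hg i)
  have hinj : Function.Injective (T x₀) := by
    rw [injective_iff_map_eq_zero]
    intro c hc
    rw [hTa] at hc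
    exact funext (Fintype.linearIndependent_iff.1 hli c hc)
  obtain ⟨S₀, hS₀⟩ := LinearMap.exists_leftInverse_of_injective (T x₀ : (Fin d → ℂ) →ₗ[ℂ] (Fin N → ℂ))
    (by rw [LinearMap.ker_eq_bot]; exact hinj)
  let S : (Fin N → ℂ) →L[ℂ] (Fin d → ℂ) := LinearMap.toContinuousLinearMap S₀
  let A : (Fin p → ℂ) → ((Fin d → ℂ) →L[ℂ] (Fin d → ℂ)) := fun x => S.comp (T x)
  have hA1 : A x₀ = 1 := by
    ext1 c
    exact LinearMap.congr_fun hS₀ c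
  have hAd : DifferentiableAt ℂ A x₀ :=
    ((ContinuousLinearMap.compL ℂ (Fin d → ℂ) (Fin N → ℂ) (Fin d → ℂ) S).differentiableAt).comp
      x₀ hTd
  have hAu : ∀ᶠ x in 𝓝 x₀, IsUnit (A x) := by
    refine hAd.continuousAt.eventually (Units.isOpen.mem_nhds ?_)
    simp [hA1]
  let u : (Fin p → ℂ) → (Fin d → ℂ) := fun x => Ring.inverse (A x) (S (h x))
  have hid : DifferentiableAt ℂ (fun x => Ring.inverse (A x)) x₀ := by
    have h1 : DifferentiableAt ℂ (Ring.inverse (M₀ := (Fin d → ℂ) →L[ℂ] (Fin d → ℂ))) (A x₀) := by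
      rw [hA1]
      exact differentiableAt_inverse isUnit_one
    exact h1.comp x₀ hAd
  have hud : DifferentiableAt ℂ u x₀ := hid.clm_apply (S.differentiableAt.comp x₀ hh)
  have heq : h =ᶠ[𝓝 x₀] fun x => T x (u x) := by
    filter_upwards [hmem, hAu] with x hx hxu
    obtain ⟨c, hc⟩ := (Submodule.mem_span_range_iff_exists_fun ℂ).1 hx
    have hTc : T x c = h x := by rw [hTa, hc]
    have : u x = c := by
      simp only [u]
      rw [← hTc]
      change (Ring.inverse (A x) * A x) c = c
      rw [Ring.inverse_mul_cancel _ hxu]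
      rfl
    rw [this, hTc]
  have heq' : h =ᶠ[𝓝 x₀] fun x => ∑ i, u x i • g i x := by
    filter_upwards [heq] with x hx
    rw [hx, hTa]
  have hui : ∀ i, HasFDerivAt (fun x => u x i)
      ((ContinuousLinearMap.proj (R := ℂ) (φ := fun _ : Fin d => ℂ) i).comp (fderiv ℂ u x₀)) x₀ :=
    fun i => hasFDerivAt_pi'.1 hud.hasFDerivAt i
  have hder := HasFDerivAt.fun_sum (u := Finset.univ)
    fun i _ => (hui i).fun_smul (hg i).hasFDerivAt
  rw [heq'.fderiv_eq, hder.fderiv]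
  simp only [sum_apply]
  refine Submodule.sum_mem _ fun i _ => ?_
  simp only [ContinuousLinearMap.add_apply, ContinuousLinearMap.smul_apply,
    ContinuousLinearMap.smulRight_apply]
  exact P.add_mem (P.smul_mem _ (hP' i)) (P.smul_mem _ (hP i))

lemma differentiableOn_multiDeriv {p N : ℕ} {Ω : Set (Fin p → ℂ)} (hΩ : IsOpen Ω)
    {f : (Fin p → ℂ) → (Fin N → ℂ)} (hf : DifferentiableOn ℂ f Ω) (L : List (Fin p)) :
    DifferentiableOn ℂ (multiDeriv L f) Ω := by
  induction L with
  | nil => exact hf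
  | cons j L ih =>
    refine differentiableOn_fderiv_apply hΩ ih (Pi.single j 1) ?_
    rw [Pi.norm_single]
    simp

/-- Span of the derivatives of order `< k`. -/
noncomputable def lowSpan {p N : ℕ} (f : (Fin p → ℂ) → (Fin N → ℂ)) (k : ℕ) (x : Fin p → ℂ) :
    Submodule ℂ (Fin N → ℂ) :=
  Submodule.span ℂ {v | ∃ L : List (Fin p), L.length < k ∧ v = multiDeriv L f x}

lemma multiDeriv_mem_lowSpan {p N : ℕ} (f : (Fin p → ℂ) → (Fin N → ℂ)) {k : ℕ} (x : Fin p → ℂ)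
    {L : List (Fin p)} (hL : L.length < k) : multiDeriv L f x ∈ lowSpan f k x :=
  Submodule.subset_span ⟨L, hL, rfl⟩

lemma lowSpan_mono {p N : ℕ} (f : (Fin p → ℂ) → (Fin N → ℂ)) {k l : ℕ} (hkl : k ≤ l)
    (x : Fin p → ℂ) : lowSpan f k x ≤ lowSpan f l x :=
  Submodule.span_mono fun _ ⟨L, hL, hv⟩ => ⟨L, hL.trans_le hkl, hv⟩

open Filter Topology in
/-- A basis of `lowSpan f k x₀` made of derivatives, which stays independent nearby. -/
lemma exists_basis_lowSpan {p N : ℕ} {Ω : Set (Fin p → ℂ)} (hΩ : IsOpen Ω)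
    {f : (Fin p → ℂ) → (Fin N → ℂ)} (hf : DifferentiableOn ℂ f Ω) (k : ℕ) {x₀ : Fin p → ℂ}
    (hx₀ : x₀ ∈ Ω) :
    ∃ L : Fin (Module.finrank ℂ (lowSpan f k x₀)) → List (Fin p), (∀ i, (L i).length < k) ∧
      ∀ᶠ x in 𝓝 x₀, LinearIndependent ℂ fun i => multiDeriv (L i) f x := by
  obtain ⟨b, hb, -, hli⟩ := Submodule.exists_fun_fin_finrank_span_eq ℂ
    {v | ∃ L : List (Fin p), L.length < k ∧ v = multiDeriv L f x₀}
  choose L hL hLb using hb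
  refine ⟨L, hL, ?_⟩
  have hc : ContinuousAt (fun x => fun i => multiDeriv (L i) f x) x₀ :=
    continuousAt_pi.2 fun i =>
      ((differentiableOn_multiDeriv hΩ hf (L i)).differentiableAt (hΩ.mem_nhds hx₀)).continuousAt
  refine hc.eventually (isOpen_setOfPred_linearIndependent.mem_nhds ?_)
  have : (fun i => multiDeriv (L i) f x₀) = b := funext fun i => (hLb i).symm
  change LinearIndependent ℂ fun i => multiDeriv (L i) f x₀
  rw [this]
  exact hli

lemma span_le_lowSpan {p N d : ℕ} (f : (Fin p → ℂ) → (Fin N → ℂ)) {k : ℕ} (x : Fin p → ℂ)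
    {L : Fin d → List (Fin p)} (hL : ∀ i, (L i).length < k) :
    Submodule.span ℂ (Set.range fun i => multiDeriv (L i) f x) ≤ lowSpan f k x := by
  rw [Submodule.span_le]
  rintro _ ⟨i, rfl⟩
  exact multiDeriv_mem_lowSpan f x (hL i)

open Filter Topology in
lemma eventually_finrank_le {p N : ℕ} {Ω : Set (Fin p → ℂ)} (hΩ : IsOpen Ω)
    {f : (Fin p → ℂ) → (Fin N → ℂ)} (hf : DifferentiableOn ℂ f Ω) (k : ℕ) {x₀ : Fin p → ℂ}
    (hx₀ : x₀ ∈ Ω) :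
    ∀ᶠ x in 𝓝 x₀, Module.finrank ℂ (lowSpan f k x₀) ≤ Module.finrank ℂ (lowSpan f k x) := by
  obtain ⟨L, hL, hev⟩ := exists_basis_lowSpan hΩ hf k hx₀
  filter_upwards [hev] with x hx
  have h1 := Submodule.finrank_mono (span_le_lowSpan f x hL)
  rwa [finrank_span_eq_card hx, Fintype.card_fin] at h1

open Filter Topology in
lemma multiDeriv_mem_of_stable {p N : ℕ} {Ω : Set (Fin p → ℂ)} (hΩ : IsOpen Ω)
    {f : (Fin p → ℂ) → (Fin N → ℂ)} (hf : DifferentiableOn ℂ f Ω) (k d : ℕ)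
    {W : Set (Fin p → ℂ)} (hW : IsOpen W) (hWΩ : W ⊆ Ω)
    (h1 : ∀ x ∈ W, Module.finrank ℂ (lowSpan f k x) = d)
    (h2 : ∀ x ∈ W, Module.finrank ℂ (lowSpan f (k + 1) x) = d) (L : List (Fin p)) :
    ∀ x ∈ W, multiDeriv L f x ∈ lowSpan f k x := by
  have heq : ∀ x ∈ W, lowSpan f k x = lowSpan f (k + 1) x := fun x hx =>
    Submodule.eq_of_le_of_finrank_eq (lowSpan_mono f k.le_succ x) ((h1 x hx).trans (h2 x hx).symm)
  induction L with
  | nil =>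
    intro x hx
    rw [heq x hx]
    exact multiDeriv_mem_lowSpan f x (by simp)
  | cons j L ih =>
    intro x hx
    obtain ⟨B, hB, hev⟩ := exists_basis_lowSpan hΩ hf k (hWΩ hx)
    have hdiff : ∀ K, DifferentiableAt ℂ (multiDeriv K f) x := fun K =>
      (differentiableOn_multiDeriv hΩ hf K).differentiableAt (hΩ.mem_nhds (hWΩ hx))
    refine fderiv_mem_of_eventually_mem (g := fun i => multiDeriv (B i) f)
      (fun i => hdiff (B i)) (hdiff L) hev.self_of_nhds ?_ _ _
      (fun i => multiDeriv_mem_lowSpan f x (hB i)) (fun i => ?_)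
    · filter_upwards [hev, hW.mem_nhds hx] with y hy hyW
      have : Submodule.span ℂ (Set.range fun i => multiDeriv (B i) f y) = lowSpan f k y := by
        refine Submodule.eq_of_le_of_finrank_eq (span_le_lowSpan f y hB) ?_
        rw [finrank_span_eq_card hy, Fintype.card_fin, h1 x hx, h1 y hyW]
      rw [this]
      exact ih y hyW
    · rw [heq x hx]
      exact multiDeriv_mem_lowSpan f x (L := j :: B i) (by simpa using hB i)

open Filter Topology in
/-- If all partial derivatives of a holomorphic `f : Ω ⊆ ℂ^p → ℂ^N` span `ℂ^N`
generically on the connected open set `Ω`, then already the derivatives of order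
`≤ N - 1` span `ℂ^N` generically on `Ω`. -/
theorem derivatives_span_of_low_order {p N : ℕ}
    (Ω : Set (Fin p → ℂ)) (hΩ : IsOpen Ω) (hconn : IsConnected Ω)
    (f : (Fin p → ℂ) → (Fin N → ℂ)) (hf : DifferentiableOn ℂ f Ω)
    (h : ∃ U : Set (Fin p → ℂ), IsOpen U ∧ U ⊆ Ω ∧ Ω ⊆ closure U ∧
      ∀ χ ∈ U, Submodule.span ℂ {v : Fin N → ℂ | ∃ L : List (Fin p), v = multiDeriv L f χ} = ⊤) :
    ∃ U : Set (Fin p → ℂ), IsOpen U ∧ U ⊆ Ω ∧ Ω ⊆ closure U ∧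
      ∀ χ ∈ U, Submodule.span ℂ
        {v : Fin N → ℂ | ∃ L : List (Fin p), L.length ≤ N - 1 ∧ v = multiDeriv L f χ} = ⊤ := by
  obtain ⟨U, hUo, hUΩ, hUd, hU⟩ := h
  have hle : ∀ k x, Module.finrank ℂ (lowSpan f k x) ≤ N := fun k x => by
    simpa using Submodule.finrank_le (lowSpan f k x)
  refine ⟨{x | x ∈ Ω ∧ N ≤ Module.finrank ℂ (lowSpan f N x)}, ?_, fun x hx => hx.1, ?_, ?_⟩
  · rw [isOpen_iff_mem_nhds]
    rintro x ⟨hx, hN⟩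
    filter_upwards [hΩ.mem_nhds hx, eventually_finrank_le hΩ hf N hx] with y hy hy'
    exact ⟨hy, hN.trans hy'⟩
  · intro x hx
    rw [mem_closure_iff]
    intro O hO hxO
    -- maximise the sum of the ranks over `O ∩ Ω`
    let s : (Fin p → ℂ) → ℕ := fun y => ∑ k ∈ Finset.range (N + 1),
      Module.finrank ℂ (lowSpan f k y)
    have hbdd : BddAbove (s '' (O ∩ Ω)) := by
      refine ⟨∑ k ∈ Finset.range (N + 1), N, ?_⟩
      rintro _ ⟨y, -, rfl⟩
      exact Finset.sum_le_sum fun k _ => hle k y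
    obtain ⟨y, hy, hys⟩ := Nat.sSup_mem (s := s '' (O ∩ Ω)) ⟨_, x, ⟨hxO, hx⟩, rfl⟩ hbdd
    have hmax : ∀ z ∈ O ∩ Ω, s z ≤ s y := fun z hz => by
      rw [hys]
      exact le_csSup hbdd ⟨z, hz, rfl⟩
    have hev : ∀ᶠ z in 𝓝 y, z ∈ O ∩ Ω ∧ ∀ k ∈ Finset.range (N + 1),
        Module.finrank ℂ (lowSpan f k z) = Module.finrank ℂ (lowSpan f k y) := by
      have h1 : ∀ᶠ z in 𝓝 y, ∀ k ∈ Finset.range (N + 1),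
          Module.finrank ℂ (lowSpan f k y) ≤ Module.finrank ℂ (lowSpan f k z) :=
        (Filter.eventually_all_finset _).2 fun k _ => eventually_finrank_le hΩ hf k hy.2
      filter_upwards [h1, (hO.inter hΩ).mem_nhds hy] with z hz hzO
      refine ⟨hzO, fun k hk => ?_⟩
      exact (((Finset.sum_eq_sum_iff_of_le hz).1
        (le_antisymm (Finset.sum_le_sum hz) (hmax z hzO))) k hk).symm
    obtain ⟨W, hWsub, hWo, hyW⟩ := mem_nhds_iff.1 hev
    by_cases hstrict : ∀ k < N, Module.finrank ℂ (lowSpan f k y) <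
        Module.finrank ℂ (lowSpan f (k + 1) y)
    · have hk : ∀ k ≤ N, k ≤ Module.finrank ℂ (lowSpan f k y) := by
        intro k
        induction k with
        | zero => intro _; exact Nat.zero_le _
        | succ k ih =>
          intro hk
          have := ih (by omega)
          have := hstrict k (by omega)
          omega
      exact ⟨y, hy.1, hy.2, hk N le_rfl⟩
    · push Not at hstrict
      obtain ⟨k, hkN, hk⟩ := hstrict
      have hkeq : Module.finrank ℂ (lowSpan f (k + 1) y) = Module.finrank ℂ (lowSpan f k y) :=
        le_antisymm hk (Submodule.finrank_mono (lowSpan_mono f k.le_succ y))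
      have hall := multiDeriv_mem_of_stable hΩ hf k (Module.finrank ℂ (lowSpan f k y)) hWo
        (fun z hz => (hWsub hz).1.2)
        (fun z hz => (hWsub hz).2 k (by simp; omega))
        (fun z hz => ((hWsub hz).2 (k + 1) (by simp; omega)).trans hkeq)
      obtain ⟨z, hzW, hzU⟩ := mem_closure_iff.1 (hUd hy.2) W hWo hyW
      refine ⟨z, (hWsub hzW).1.1, (hWsub hzW).1.2, ?_⟩
      have htop : lowSpan f N z = ⊤ := by
        rw [eq_top_iff, ← hU z hzU, Submodule.span_le]
        rintro _ ⟨L, rfl⟩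
        exact lowSpan_mono f hkN.le z (hall L z hzW)
      rw [htop]
      simp
  · rintro x ⟨-, hx⟩
    have htop : lowSpan f N x = ⊤ := by
      refine Submodule.eq_top_of_finrank_eq ?_
      rw [le_antisymm (hle N x) hx]
      simp
    rw [eq_top_iff, ← htop]
    refine Submodule.span_mono ?_
    rintro _ ⟨L, hL, rfl⟩
    exact ⟨L, by omega, rfl⟩
end

section
/- Let R : Δ_ε × V → ℂ be a function, where Δ_ε = {t ∈ ℂ : |t| < ε} and V is a neighborhood of 0 in a real analytic hypersurface M ⊂ ℂ^N, such that R is smooth, holomorphic in t for each fixed Z, R(t,0) ≡ 0, and for each t ∈ Δ_ε the function Z ↦ R(t,Z) extends holomorphically to some neighborhood O_t of 0 in ℂ^N (depending on t). Then there exist η > 0, t_0 ∈ Δ_ε, and a neighborhood O of 0 in ℂ^N such that R extends holomorphically to {t : |t − t_0| < η} × O. -/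
open Filter Topology Metric Set

/-- Second order Taylor estimate for bounded holomorphic functions on a ball. -/
lemma taylor_bound_aux {E : Type*} [NormedAddCommGroup E] [NormedSpace ℂ E]
    {f : E → ℂ} {c z : E} {r C : ℝ} (hr : 0 < r)
    (hd : DifferentiableOn ℂ f (ball c r)) (hb : ∀ w ∈ ball c r, ‖f w‖ ≤ C)
    (hz : z ∈ ball c r) :
    ‖f z - f c - fderiv ℂ f c (z - c)‖ ≤ (4 * C) * (‖z - c‖ / r) ^ 2 := by
  have hcm : c ∈ ball c r := mem_ball_self hr
  have hmaps : MapsTo f (ball c r) (closedBall (f c) (2 * C)) := by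
    intro w hw
    rw [mem_closedBall, dist_eq_norm]
    have h1 := norm_sub_le (f w) (f c)
    have h2 := hb w hw
    have h3 := hb c hcm
    linarith
  have hfd : ‖fderiv ℂ f c‖ ≤ 2 * C / r :=
    Complex.norm_fderiv_le_div_of_mapsTo_ball hd hmaps hr
  have hda : DifferentiableAt ℂ f c := hd.differentiableAt (ball_mem_nhds c hr)
  set F : E → ℂ := fun w => f w - fderiv ℂ f c (w - c) with hF
  have hFc : F c = f c := by simp [hF]
  have hFd : DifferentiableOn ℂ F (ball c r) := by
    apply hd.sub
    fun_prop
  have hFm : MapsTo F (ball c r) (closedBall (F c) (4 * C)) := by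
    intro w hw
    rw [mem_closedBall, dist_eq_norm, hFc]
    have h1 := hmaps hw
    rw [mem_closedBall, dist_eq_norm] at h1
    have h2 : ‖fderiv ℂ f c (w - c)‖ ≤ 2 * C := by
      have hw' : ‖w - c‖ ≤ r := by
        rw [← dist_eq_norm]; exact (mem_ball.1 hw).le
      calc ‖fderiv ℂ f c (w - c)‖ ≤ ‖fderiv ℂ f c‖ * ‖w - c‖ := ContinuousLinearMap.le_opNorm _ _
        _ ≤ (2 * C / r) * r := by
          apply mul_le_mul hfd hw' (norm_nonneg _) ((norm_nonneg _).trans hfd)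
        _ = 2 * C := by field_simp
    calc ‖F w - f c‖ = ‖(f w - f c) - fderiv ℂ f c (w - c)‖ := by
          congr 1; simp only [hF]; ring
      _ ≤ ‖f w - f c‖ + ‖fderiv ℂ f c (w - c)‖ := norm_sub_le _ _
      _ ≤ 4 * C := by linarith
  have ho : (F · - F c) =o[𝓝 c] (fun w ↦ ‖w - c‖ ^ 1) := by
    have := hda.hasFDerivAt.isLittleO
    simp only [pow_one]
    refine Asymptotics.IsLittleO.norm_right ?_
    refine this.congr_left ?_
    intro w
    simp only [hF, sub_self, map_zero, sub_zero]
    ring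
  have key := Complex.dist_le_mul_div_pow_of_mapsTo_ball_of_isLittleO hFd hFm ho hz
  rw [dist_eq_norm, dist_eq_norm, hFc] at key
  calc ‖f z - f c - fderiv ℂ f c (z - c)‖ = ‖F z - f c‖ := by
        congr 1; simp only [hF]; ring
    _ ≤ _ := key

/-- Montel: a bounded family of holomorphic functions has a holomorphic pointwise limit along
any ultrafilter. -/
lemma montel_ultrafilter {ι E : Type*} [NormedAddCommGroup E] [NormedSpace ℂ E]
    [FiniteDimensional ℂ E] {U : Set E} (hU : IsOpen U) (u : Ultrafilter ι) (f : ι → E → ℂ)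
    (C : ℝ) (hd : ∀ i, DifferentiableOn ℂ (f i) U) (hb : ∀ i, ∀ z ∈ U, ‖f i z‖ ≤ C) :
    ∃ F : E → ℂ, DifferentiableOn ℂ F U ∧
      ∀ z ∈ U, Tendsto (fun i => f i z) u (𝓝 (F z)) := by
  have hlim : ∀ z, ∃ y : ℂ, z ∈ U → Tendsto (fun i => f i z) u (𝓝 y) := by
    intro z
    by_cases hz : z ∈ U
    · obtain ⟨y, -, hy⟩ := (isCompact_closedBall (0 : ℂ) C).ultrafilter_le_nhds
        (u.map (fun i => f i z)) (by
          rw [le_principal_iff]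
          exact Filter.mem_map.2 (Filter.univ_mem' (fun i => by simpa using hb i z hz)))
      exact ⟨y, fun _ => hy⟩
    · exact ⟨0, fun h => absurd h hz⟩
  choose F hF using hlim
  refine ⟨F, ?_, hF⟩
  intro c hc
  obtain ⟨r, hr, hrU⟩ := Metric.isOpen_iff.1 hU c hc
  have hfd : ∀ i, ‖fderiv ℂ (f i) c‖ ≤ 2 * C / r := by
    intro i
    refine Complex.norm_fderiv_le_div_of_mapsTo_ball ((hd i).mono hrU) ?_ hr
    intro w hw
    rw [mem_closedBall, dist_eq_norm]
    have h1 := norm_sub_le (f i w) (f i c)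
    have h2 := hb i w (hrU hw)
    have h3 := hb i c hc
    linarith
  have : ProperSpace (E →L[ℂ] ℂ) := FiniteDimensional.proper ℂ _
  obtain ⟨L, -, hL⟩ := (isCompact_closedBall (0 : E →L[ℂ] ℂ) (2 * C / r)).ultrafilter_le_nhds
    (u.map (fun i => fderiv ℂ (f i) c)) (by
      rw [le_principal_iff]
      exact Filter.mem_map.2 (Filter.univ_mem' (fun i => by simpa using hfd i)))
  have hL' : Tendsto (fun i => fderiv ℂ (f i) c) u (𝓝 L) := hL
  have hbound : ∀ z ∈ ball c r, ‖F z - F c - L (z - c)‖ ≤ (4 * C) * (‖z - c‖ / r) ^ 2 := by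
    intro z hz
    have ht : Tendsto (fun i => ‖f i z - f i c - fderiv ℂ (f i) c (z - c)‖) u
        (𝓝 ‖F z - F c - L (z - c)‖) := by
      refine (((hF z (hrU hz)).sub (hF c hc)).sub ?_).norm
      exact ((ContinuousLinearMap.apply ℂ ℂ (z - c)).continuous.tendsto L).comp hL'
    refine le_of_tendsto ht (Filter.Eventually.of_forall fun i => ?_)
    exact taylor_bound_aux hr ((hd i).mono hrU) (fun w hw => hb i w (hrU hw)) hz
  have hder : HasFDerivAt F L c := by
    rw [hasFDerivAt_iff_isLittleO]
    have hO : (fun z => F z - F c - L (z - c)) =O[𝓝 c] (fun z => ‖z - c‖ ^ 2) := by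
      refine Asymptotics.IsBigO.of_bound (4 * C / r ^ 2) ?_
      filter_upwards [ball_mem_nhds c hr] with z hz
      refine (hbound z hz).trans (le_of_eq ?_)
      rw [Real.norm_of_nonneg (by positivity)]
      field_simp
    refine hO.trans_isLittleO ?_
    exact Asymptotics.isLittleO_pow_sub_sub c one_lt_two
  exact hder.differentiableAt.differentiableWithinAt

/-- Riemann sums of a continuous function on `[0, 2π]`. -/
lemma riemann_sum_aux (φ : ℝ → ℂ) (hφ : Continuous φ) :
    Tendsto (fun n : ℕ => ((n + 1 : ℕ) : ℝ)⁻¹ • ∑ k ∈ Finset.range (n + 1),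
      φ (2 * Real.pi * k / (n + 1 : ℕ))) atTop
      (𝓝 ((2 * Real.pi)⁻¹ • ∫ θ in (0 : ℝ)..2 * Real.pi, φ θ)) := by
  have hpi := Real.pi_pos
  rw [Metric.tendsto_atTop]
  intro e he
  have huc : UniformContinuousOn φ (Icc 0 (2 * Real.pi)) :=
    isCompact_Icc.uniformContinuousOn_of_continuous hφ.continuousOn
  obtain ⟨δ, hδ, hδ'⟩ := Metric.uniformContinuousOn_iff.1 huc (e / 2) (by positivity)
  obtain ⟨n0, hn0⟩ := exists_nat_gt (2 * Real.pi / δ)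
  refine ⟨n0, fun n hn => ?_⟩
  set m : ℕ := n + 1 with hm
  have hmpos : (0 : ℝ) < m := by positivity
  have hmδ : 2 * Real.pi / m < δ := by
    rw [div_lt_iff₀ hmpos]
    rw [div_lt_iff₀ hδ] at hn0
    have : (n0 : ℝ) ≤ m := by exact_mod_cast (by omega : n0 ≤ m)
    nlinarith
  set a : ℕ → ℝ := fun k => 2 * Real.pi * k / m with ha
  have hstep : ∀ k, a (k + 1) - a k = 2 * Real.pi / m := by
    intro k; simp only [ha]; push_cast; ring
  have hsplit : ∑ k ∈ Finset.range m, ∫ x in a k..a (k + 1), φ x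
      = ∫ x in (0 : ℝ)..2 * Real.pi, φ x := by
    rw [intervalIntegral.sum_integral_adjacent_intervals
      (fun k _ => hφ.intervalIntegrable _ _)]
    congr 1
    · simp [ha]
    · simp only [ha]; field_simp
  have hterm : ∀ k ∈ Finset.range m,
      ‖(2 * Real.pi / m) • φ (a k) - ∫ x in a k..a (k + 1), φ x‖ ≤ e / 2 * (2 * Real.pi / m) := by
    intro k hk
    have hk' : (k : ℝ) + 1 ≤ m := by exact_mod_cast Finset.mem_range.1 hk
    have h1 : (2 * Real.pi / m) • φ (a k) = ∫ x in a k..a (k + 1), φ (a k) := by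
      rw [intervalIntegral.integral_const, hstep]
    have hle : a k ≤ a (k + 1) := by
      have := hstep k
      have : 0 < 2 * Real.pi / m := by positivity
      linarith
    have ha0 : 0 ≤ a k := by simp only [ha]; positivity
    have ha1 : a (k + 1) ≤ 2 * Real.pi := by
      simp only [ha]
      rw [div_le_iff₀ hmpos]
      push_cast
      nlinarith
    rw [h1, ← intervalIntegral.integral_sub (by simp) (hφ.intervalIntegrable _ _)]
    refine (intervalIntegral.norm_integral_le_of_norm_le_const (C := e / 2) ?_).trans (le_of_eq ?_)
    · intro x hx
      rw [uIoc_of_le hle] at hx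
      rw [← dist_eq_norm]
      refine (hδ' _ ⟨ha0, hle.trans ha1⟩ _ ⟨ha0.trans hx.1.le, hx.2.trans ha1⟩ ?_).le
      rw [Real.dist_eq, abs_sub_comm, abs_of_pos (by linarith [hx.1])]
      have := hstep k
      linarith [hx.2]
    · rw [hstep, abs_of_pos (by positivity)]
  have hsum : ‖∑ k ∈ Finset.range m, ((2 * Real.pi / m) • φ (a k)
      - ∫ x in a k..a (k + 1), φ x)‖ ≤ e / 2 * (2 * Real.pi) := by
    refine (norm_sum_le_of_le _ hterm).trans (le_of_eq ?_)
    rw [Finset.sum_const, Finset.card_range, nsmul_eq_mul]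
    field_simp
  rw [Finset.sum_sub_distrib, hsplit] at hsum
  rw [dist_eq_norm]
  have heq : (m : ℝ)⁻¹ • ∑ k ∈ Finset.range m, φ (2 * Real.pi * k / m)
      - (2 * Real.pi)⁻¹ • ∫ x in (0 : ℝ)..2 * Real.pi, φ x
      = (2 * Real.pi)⁻¹ • (∑ k ∈ Finset.range m, (2 * Real.pi / m) • φ (a k)
        - ∫ x in (0 : ℝ)..2 * Real.pi, φ x) := by
    rw [smul_sub, ← Finset.smul_sum, smul_smul]
    congr 2
    field_simp
  rw [heq, norm_smul, Real.norm_of_nonneg (by positivity)]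
  calc (2 * Real.pi)⁻¹ * _ ≤ (2 * Real.pi)⁻¹ * (e / 2 * (2 * Real.pi)) := by gcongr
    _ = e / 2 := by field_simp
    _ < e := by linarith

/-- Discrete Cauchy formula. -/
lemma discrete_cauchy (f : ℂ → ℂ) (c w : ℂ) (r : ℝ) (hr : 0 < r)
    (hf : DifferentiableOn ℂ f (closedBall c r)) (hw : w ∈ ball c r) :
    Tendsto (fun n : ℕ => ((n + 1 : ℕ) : ℝ)⁻¹ • ∑ k ∈ Finset.range (n + 1),
      ((circleMap c r (2 * Real.pi * k / (n + 1 : ℕ)) - c) /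
        (circleMap c r (2 * Real.pi * k / (n + 1 : ℕ)) - w)) *
        f (circleMap c r (2 * Real.pi * k / (n + 1 : ℕ)))) atTop (𝓝 (f w)) := by
  have hcl : DiffContOnCl ℂ f (ball c |r|) := by
    rw [abs_of_pos hr]
    exact hf.diffContOnCl_ball (Subset.refl _)
  have h1 := hcl.circleAverage_smul_div (w := w) (by rwa [abs_of_pos hr])
  rw [Real.circleAverage_def] at h1
  rw [← h1]
  refine riemann_sum_aux (fun θ => ((circleMap c r θ - c) / (circleMap c r θ - w)) •
    f (circleMap c r θ)) ?_
  have hq1 : Continuous fun θ : ℝ => (circleMap c r θ - c) / (circleMap c r θ - w) := by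
    refine Continuous.div ?_ ?_ ?_
    · exact (continuous_circleMap c r).sub continuous_const
    · exact (continuous_circleMap c r).sub continuous_const
    · intro θ
      exact sub_ne_zero.2 (circleMap_ne_mem_ball hw θ)
  have hq2 : Continuous fun θ : ℝ => f (circleMap c r θ) :=
    hf.continuousOn.comp_continuous (continuous_circleMap c r)
      (fun θ => circleMap_mem_closedBall c hr.le θ)
  exact hq1.smul hq2

/-- Lemma 5.10: let `M` be a real analytic hypersurface through `0` in `ℂ^N`, `V` a
neighborhood of `0` in `M`, and `R(t,Z)` a smooth function on `Δ_ε × V`, holomorphic in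
`t`, with `R(t,0) ≡ 0`, such that for each fixed `t ∈ Δ_ε` the function `Z ↦ R(t,Z)`
extends holomorphically to some neighborhood `O_t` of `0` in `ℂ^N`.  Then there exist
`η > 0`, `t₀ ∈ Δ_ε` and a neighborhood `O` of `0` in `ℂ^N` such that `R` extends
holomorphically to `{|t - t₀| < η} × O`. -/
theorem holomorphic_extension_in_both_variables {N : ℕ}
    (M : Set (Fin N → ℂ))
    (hM : ∃ (U : Set (Fin N → ℂ)) (ρ : (Fin N → ℂ) → ℝ), IsOpen U ∧ (0 : Fin N → ℂ) ∈ U ∧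
      AnalyticOnNhd ℝ ρ U ∧ M = {Z ∈ U | ρ Z = 0} ∧ ∀ Z ∈ M, fderiv ℝ ρ Z ≠ 0)
    (ε : ℝ) (hε : 0 < ε)
    (V : Set (Fin N → ℂ)) (hV0 : (0 : Fin N → ℂ) ∈ V)
    (hVnbhd : ∃ W : Set (Fin N → ℂ), IsOpen W ∧ (0 : Fin N → ℂ) ∈ W ∧ V = M ∩ W)
    (R : ℂ → (Fin N → ℂ) → ℂ)
    (hsmooth : ContDiffOn ℝ (⊤ : ℕ∞) (fun q : ℂ × (Fin N → ℂ) => R q.1 q.2)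
      (Metric.ball (0 : ℂ) ε ×ˢ V))
    (hholo_t : ∀ Z ∈ V, DifferentiableOn ℂ (fun t => R t Z) (Metric.ball (0 : ℂ) ε))
    (hR0 : ∀ t ∈ Metric.ball (0 : ℂ) ε, R t 0 = 0)
    (hext : ∀ t ∈ Metric.ball (0 : ℂ) ε, ∃ (O : Set (Fin N → ℂ)) (g : (Fin N → ℂ) → ℂ),
      IsOpen O ∧ (0 : Fin N → ℂ) ∈ O ∧ DifferentiableOn ℂ g O ∧ ∀ Z ∈ O ∩ V, g Z = R t Z) :
    ∃ (η : ℝ) (t₀ : ℂ) (O : Set (Fin N → ℂ)), 0 < η ∧ t₀ ∈ Metric.ball (0 : ℂ) ε ∧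
      IsOpen O ∧ (0 : Fin N → ℂ) ∈ O ∧
      ∃ G : ℂ × (Fin N → ℂ) → ℂ, DifferentiableOn ℂ G (Metric.ball t₀ η ×ˢ O) ∧
        ∀ t ∈ Metric.ball t₀ η ∩ Metric.ball (0 : ℂ) ε, ∀ Z ∈ O ∩ V, G (t, Z) = R t Z := by
  have hRcont : ∀ Z ∈ V, ContinuousOn (fun t => R t Z) (Metric.ball (0 : ℂ) ε) :=
    fun Z hZ => (hholo_t Z hZ).continuousOn
  set X := {t : ℂ // t ∈ ball (0 : ℂ) ε} with hX
  have : BaireSpace X := (isOpen_ball : IsOpen (ball (0 : ℂ) ε)).baireSpace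
  have : Nonempty X := ⟨⟨0, mem_ball_self hε⟩⟩
  let P : ℕ → X → ((Fin N → ℂ) → ℂ) → Prop := fun q t g =>
    ∀ Z ∈ ball (0 : Fin N → ℂ) (1 / ((q : ℝ) + 1)) ∩ V, g Z = R t.1 Z
  let A : ℕ → ((Fin N → ℂ) → ℂ) → Prop := fun q g =>
    DifferentiableOn ℂ g (ball (0 : Fin N → ℂ) (1 / ((q : ℝ) + 1))) ∧
    ∀ Z ∈ ball (0 : Fin N → ℂ) (1 / ((q : ℝ) + 1)), ‖g Z‖ ≤ q
  let S : ℕ → Set X := fun q => {t | ∃ g, A q g ∧ P q t g}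
  have hg : ∀ q : ℕ, ∀ t : X, ∃ g, A q g ∧ (t ∈ S q → P q t g) := by
    intro q t
    by_cases ht : t ∈ S q
    · obtain ⟨g, h1, h2⟩ := ht
      exact ⟨g, h1, fun _ => h2⟩
    · refine ⟨fun _ => 0, ⟨differentiableOn_const _, fun Z _ => by simp⟩, fun h => absurd h ht⟩
  choose g hgA hgP using hg
  have hclosed : ∀ q, IsClosed (S q) := by
    intro q
    rw [isClosed_iff_ultrafilter]
    intro x u hux hS
    obtain ⟨F, hFd, hFt⟩ := montel_ultrafilter isOpen_ball u (g q) q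
      (fun t => (hgA q t).1) (fun t => (hgA q t).2)
    refine ⟨F, ⟨hFd, fun Z hZ => ?_⟩, fun Z hZ => ?_⟩
    · exact le_of_tendsto (hFt Z hZ).norm (Eventually.of_forall fun t => (hgA q t).2 Z hZ)
    · have hc : Continuous (fun t : X => R t.1 Z) :=
        continuousOn_iff_continuous_domRestrict.1 (hRcont Z hZ.2)
      have h1 : Tendsto (fun t : X => R t.1 Z) u (𝓝 (R x.1 Z)) := (hc.tendsto x).mono_left hux
      have h2 : Tendsto (fun t : X => R t.1 Z) u (𝓝 (F Z)) := by
        refine (hFt Z hZ.1).congr' ?_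
        filter_upwards [hS] with t ht
        exact hgP q t ht Z hZ
      exact tendsto_nhds_unique h2 h1
  have hunion : ⋃ q, S q = univ := by
    refine eq_univ_of_forall fun t => ?_
    obtain ⟨O, g0, hO, h0, hd, he⟩ := hext t.1 t.2
    have hcont : ContinuousAt g0 0 := (hd.differentiableAt (hO.mem_nhds h0)).continuousAt
    have hev : ∀ᶠ Z in 𝓝 (0 : Fin N → ℂ), ‖g0 Z‖ < ‖g0 0‖ + 1 ∧ Z ∈ O :=
      (hcont.norm.eventually (gt_mem_nhds (by linarith))).and (hO.mem_nhds h0)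
    obtain ⟨r, hr, hrb⟩ := Metric.eventually_nhds_iff_ball.1 hev
    obtain ⟨q, hq⟩ := exists_nat_gt (max (1 / r) (‖g0 0‖ + 1))
    have hq1 : 1 / ((q : ℝ) + 1) ≤ r := by
      have h := (le_max_left (1 / r) (‖g0 0‖ + 1)).trans_lt hq
      rw [div_lt_iff₀ hr] at h
      rw [div_le_iff₀ (by positivity)]
      nlinarith
    have hq2 : ‖g0 0‖ + 1 < q := (le_max_right _ _).trans_lt hq
    have hsub := ball_subset_ball (x := (0 : Fin N → ℂ)) hq1
    refine mem_iUnion.2 ⟨q, g0, ⟨hd.mono fun Z hZ => (hrb Z (hsub hZ)).2, fun Z hZ => ?_⟩,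
      fun Z hZ => he Z ⟨(hrb Z (hsub hZ.1)).2, hZ.2⟩⟩
    exact ((hrb Z (hsub hZ)).1.trans hq2).le
  obtain ⟨q, x0, hx0⟩ := nonempty_interior_of_iUnion_of_closed hclosed hunion
  obtain ⟨r, hr, hrS⟩ : ∃ r > 0, ∀ t ∈ closedBall x0.1 r, ∃ h : t ∈ ball (0 : ℂ) ε,
      (⟨t, h⟩ : X) ∈ S q := by
    have h1 : IsOpen (Subtype.val '' (interior (S q))) :=
      (isOpen_ball : IsOpen (ball (0 : ℂ) ε)).isOpenMap_subtype_val _ isOpen_interior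
    obtain ⟨r, hr, hsub⟩ := Metric.nhds_basis_closedBall.mem_iff.1
      (h1.mem_nhds (mem_image_of_mem _ hx0))
    refine ⟨r, hr, fun t ht => ?_⟩
    obtain ⟨y, hy, rfl⟩ := hsub ht
    exact ⟨y.2, interior_subset hy⟩
  set B : Set (Fin N → ℂ) := ball (0 : Fin N → ℂ) (1 / ((q : ℝ) + 1)) with hB
  -- total version of the family
  have hg' : ∀ t : ℂ, ∃ g, A q g ∧ (t ∈ closedBall x0.1 r → ∀ Z ∈ B ∩ V, g Z = R t Z) := by
    intro t
    by_cases ht : t ∈ closedBall x0.1 r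
    · obtain ⟨h, hS⟩ := hrS t ht
      exact ⟨g q ⟨t, h⟩, hgA _ _, fun _ => hgP q _ hS⟩
    · exact ⟨fun _ => 0, ⟨differentiableOn_const _, fun Z _ => by simp⟩, fun h => absurd h ht⟩
  choose γ hγA hγP using hg'
  let τ : ℕ → ℕ → ℂ := fun n k => circleMap x0.1 r (2 * Real.pi * k / (n + 1 : ℕ))
  let T : ℕ → ℂ × (Fin N → ℂ) → ℂ := fun n p => ((n + 1 : ℕ) : ℝ)⁻¹ •
    ∑ k ∈ Finset.range (n + 1), ((τ n k - x0.1) / (τ n k - p.1)) * γ (τ n k) p.2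
  have hτ : ∀ n k, ‖τ n k - x0.1‖ = r := by
    intro n k
    rw [← dist_eq_norm]
    exact mem_sphere.1 (circleMap_mem_sphere _ hr.le _)
  have hτ2 : ∀ n k, ∀ t ∈ ball x0.1 (r / 2), r / 2 ≤ ‖τ n k - t‖ := by
    intro n k t ht
    rw [mem_ball, dist_eq_norm] at ht
    have h1 : ‖τ n k - x0.1‖ ≤ ‖τ n k - t‖ + ‖t - x0.1‖ := by
      simpa using norm_add_le (τ n k - t) (t - x0.1)
    rw [hτ] at h1
    linarith
  obtain ⟨G, hGd, hGt⟩ := montel_ultrafilter (U := ball x0.1 (r / 2) ×ˢ B)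
    (isOpen_ball.prod isOpen_ball) (Ultrafilter.of (atTop : Filter ℕ)) T (2 * q) (by
      intro n
      refine DifferentiableOn.fun_const_smul ?_ ((n + 1 : ℕ) : ℝ)⁻¹
      refine DifferentiableOn.fun_sum fun k _ => ?_
      simp only [div_eq_mul_inv]
      refine DifferentiableOn.fun_mul (DifferentiableOn.fun_mul (differentiableOn_const _)
        (DifferentiableOn.fun_inv ((differentiableOn_const _).fun_sub differentiableOn_fst) ?_)) ?_
      · intro p hp h0
        have := hτ2 n k p.1 hp.1
        rw [h0, norm_zero] at this
        linarith
      · exact (hγA (τ n k)).1.comp differentiableOn_snd (fun p hp => hp.2)) (by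
      intro n p hp
      have hterm : ∀ k ∈ Finset.range (n + 1),
          ‖((τ n k - x0.1) / (τ n k - p.1)) * γ (τ n k) p.2‖ ≤ 2 * q := by
        intro k _
        rw [norm_mul, norm_div, hτ]
        have h1 := hτ2 n k p.1 hp.1
        have h2 : r / ‖τ n k - p.1‖ ≤ 2 := by
          rw [div_le_iff₀ (by linarith)]
          linarith
        exact mul_le_mul h2 ((hγA (τ n k)).2 p.2 hp.2) (norm_nonneg _) (by norm_num)
      have hs := norm_sum_le_of_le _ hterm
      rw [Finset.sum_const, Finset.card_range, nsmul_eq_mul] at hs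
      simp only [T]
      rw [norm_smul, Real.norm_of_nonneg (by positivity)]
      calc (((n + 1 : ℕ) : ℝ))⁻¹ * _ ≤ (((n + 1 : ℕ) : ℝ))⁻¹ * (((n + 1 : ℕ) : ℝ) * (2 * q)) := by
            gcongr
        _ = 2 * q := by
            have : (((n + 1 : ℕ) : ℝ)) ≠ 0 := by positivity
            field_simp)
  refine ⟨r / 2, x0.1, B, by positivity, x0.2, isOpen_ball, mem_ball_self (by positivity), G, hGd,
    ?_⟩
  intro t ht Z hZ
  have h1 := hGt (t, Z) ⟨ht.1, hZ.1⟩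
  have h2 := discrete_cauchy (fun s => R s Z) x0.1 t r hr
    ((hholo_t Z hZ.2).mono fun s hs => (hrS s hs).1)
    (ball_subset_ball (by linarith) ht.1)
  refine tendsto_nhds_unique h1 ((h2.mono_left (Ultrafilter.of_le _)).congr fun n => ?_)
  simp only [T]
  congr 1
  refine Finset.sum_congr rfl fun k _ => ?_
  rw [hγP (τ n k) (circleMap_mem_closedBall _ hr.le _) Z hZ]
end
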